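/- Let (R, m) be a commutative Noetherian local ring and M a weakly Laskerian R-module. Then M ⊗_R R* is a weakly Laskerian R*-module, where R* denotes the m-adic completion of R. -/

import Mathlib

open TensorProduct IsLocalRing

/-!
Over a Noetherian ring `R`, a module `M` is weakly Laskerian if and only if it has a finitely
generated submodule `N` such that `M ⧸ N` has finite support. Supports of quotients of a weakly
Laskerian module are closed, so `N` can be chosen with `Supp (M ⧸ N)` minimal, and then every
`p ∈ Supp (M ⧸ N)` lies in `Supp (M ⧸ N')` for all finitely generated `N'`. Were this set infinite,
one could build finitely generated subquotients `F₀ ⧸ N₀ ↪ F₁ ⧸ N₁ ↪ ⋯` of `M`, each acquiring an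
element annihilated exactly by a new prime `p j`: the new element is taken in a high power of the
annihilator of the previous stage, so that by Artin–Rees its multiples meet that stage trivially.
As the maps are injective, every `p j` is associated to `M ⧸ ⨆ Nⱼ`, a contradiction.

This criterion passes to `S ⊗ M`, for `S` Noetherian, as soon as only finitely many primes of `S`
lie over the support of `M ⧸ N`. Let `S` be the completion at `I`, which is a quotient of a power
series ring over `R`. Primes of `S` containing `IS` are determined by their contractions. If a
prime `Q` over the support does not contain `IS`, finiteness of the support bounds by `1` the
lengths of chains of primes of `R` starting at the contraction `p` of `Q`; it follows that a
maximal ideal above `Q` is minimal over `pS + aS` for some `a ∈ I`, so that `Q` is minimal over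
`pS` by Krull's principal ideal theorem.
-/

/-! ### Supports and associated primes -/

section Support

variable {R : Type*} [CommRing R] {M : Type*} [AddCommGroup M] [Module R M]

theorem bot_colon_singleton_mkQ (N : Submodule R M) (x : M) :
    (⊥ : Submodule R (M ⧸ N)).colon {N.mkQ x} = N.colon {x} := by
  ext r
  rw [Submodule.mem_colon_singleton, Submodule.mem_colon_singleton, ← map_smul,
    Submodule.mem_bot, Submodule.mkQ_apply, Submodule.Quotient.mk_eq_zero]

theorem mem_associatedPrimes_quotient_iff [IsNoetherianRing R] {N : Submodule R M} {p : Ideal R} :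
    p ∈ associatedPrimes R (M ⧸ N) ↔ p.IsPrime ∧ ∃ x, N.colon {x} = p := by
  simp only [AssociatedPrimes.mem_iff, isAssociatedPrime_iff, N.mkQ_surjective.exists,
    bot_colon_singleton_mkQ, eq_comm]

theorem mem_support_iff_exists_colon_le {p : PrimeSpectrum R} :
    p ∈ Module.support R M ↔ ∃ x, (⊥ : Submodule R M).colon {x} ≤ p.asIdeal := by
  simp only [Module.mem_support_iff_exists_annihilator, ← Submodule.bot_colon']

theorem mem_support_quotient_iff {N : Submodule R M} {p : PrimeSpectrum R} :
    p ∈ Module.support R (M ⧸ N) ↔ ∃ x, N.colon {x} ≤ p.asIdeal := by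
  simp only [mem_support_iff_exists_colon_le, N.mkQ_surjective.exists, bot_colon_singleton_mkQ]

theorem support_quotient_subset_of_le {N N' : Submodule R M} (h : N ≤ N') :
    Module.support R (M ⧸ N') ⊆ Module.support R (M ⧸ N) :=
  Module.support_subset_of_surjective (Submodule.factor h) (Submodule.factor_surjective h)

theorem mem_support_iff_exists_associatedPrime_le [IsNoetherianRing R] {p : PrimeSpectrum R} :
    p ∈ Module.support R M ↔ ∃ q ∈ associatedPrimes R M, q ≤ p.asIdeal := by
  rw [mem_support_iff_exists_colon_le]
  constructor
  · rintro ⟨x, hx⟩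
    obtain ⟨q, hq, hqp⟩ := Ideal.exists_minimalPrimes_le hx
    obtain ⟨y, hy⟩ := Submodule.exists_eq_colon_of_mem_minimalPrimes hq
    exact ⟨q, isAssociatedPrime_iff.mpr ⟨hq.1.1, y, hy⟩, hqp⟩
  · rintro ⟨q, hq, hqp⟩
    obtain ⟨-, x, rfl⟩ := isAssociatedPrime_iff.mp hq
    exact ⟨x, hqp⟩

theorem isClosed_support_of_finite_associatedPrimes [IsNoetherianRing R]
    (h : (associatedPrimes R M).Finite) : IsClosed (Module.support R M) := by
  have : Module.support R M =
      ⋃ q ∈ associatedPrimes R M, PrimeSpectrum.zeroLocus (q : Set R) := by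
    ext p
    simp [mem_support_iff_exists_associatedPrime_le, PrimeSpectrum.mem_zeroLocus]
  rw [this]
  exact h.isClosed_biUnion fun q _ => PrimeSpectrum.isClosed_zeroLocus _

theorem finite_associatedPrimes_of_finite_support [IsNoetherianRing R]
    (h : (Module.support R M).Finite) : (associatedPrimes R M).Finite :=
  (h.image PrimeSpectrum.asIdeal).subset fun q hq =>
    ⟨⟨q, hq.isPrime⟩, mem_support_iff_exists_associatedPrime_le.mpr ⟨q, hq, le_rfl⟩, rfl⟩

end Support

theorem exists_infinite_subset_finite_inter_Ici {R : Type*} [CommRing R] [IsNoetherianRing R]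
    {X : Set (PrimeSpectrum R)} (hX : X.Infinite) :
    ∃ Y ⊆ X, Y.Infinite ∧ ∀ q ∈ Y, (Y ∩ Set.Ici q).Finite := by
  obtain ⟨J, hJ⟩ := exists_maximal_of_wellFoundedGT
    (fun J : Ideal R => {q ∈ X | J ≤ q.asIdeal}.Infinite) ⟨⊥, by simpa using hX⟩
  refine ⟨{q ∈ X | J < q.asIdeal}, Set.sep_subset _ _, ?_, fun q hq => ?_⟩
  · refine (hJ.prop.sdiff (t := {q | q.asIdeal = J}) ?_).mono ?_
    · exact Set.Subsingleton.finite fun p hp q hq =>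
        PrimeSpectrum.ext (hp.trans hq.symm)
    · exact fun q hq => ⟨hq.1.1, lt_of_le_of_ne hq.1.2 (Ne.symm hq.2)⟩
  · refine (Set.not_infinite.mp (hJ.not_prop_of_gt hq.2)).subset ?_
    exact fun q' hq' => ⟨hq'.1.1, hq'.2⟩

/-! ### Chains of subquotients -/

section ArtinRees

variable {R : Type*} [CommRing R] [IsNoetherianRing R] {M : Type*} [AddCommGroup M] [Module R M]

theorem exists_pow_smul_inf_le_smul (I : Ideal R) {F G : Submodule R M} (hF : F.FG)
    (hGF : G ≤ F) : ∃ n, I ^ n • F ⊓ G ≤ I • G := by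
  have : Module.Finite R F := Module.Finite.iff_fg.mpr hF
  obtain ⟨k, hk⟩ := I.exists_pow_inf_eq_pow_smul (G.comap F.subtype)
  have h : I ^ (k + 1) • ⊤ ⊓ G.comap F.subtype ≤ I • G.comap F.subtype := by
    rw [hk (k + 1) k.le_succ, Nat.add_sub_cancel_left, pow_one]
    exact smul_mono_right I inf_le_right
  refine ⟨k + 1, ?_⟩
  have := Submodule.map_mono (f := F.subtype) h
  rw [Submodule.map_smul'', Submodule.map_inf _ F.subtype_injective, Submodule.map_smul'',
    Submodule.map_top, Submodule.range_subtype, Submodule.map_comap_subtype,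
    inf_eq_right.mpr hGF] at this
  exact this

end ArtinRees

/-- A finitely generated subquotient `num ⧸ den` of `M`, ordered by the relation that the inclusion
of numerators induces an injection `A.num ⧸ A.den → B.num ⧸ B.den`. -/
structure FGSubquotient (R M : Type*) [CommRing R] [AddCommGroup M] [Module R M] where
  den : Submodule R M
  num : Submodule R M
  den_le_num : den ≤ num
  fg_num : num.FG

namespace FGSubquotient

section Basic

variable {R : Type*} [CommRing R] {M : Type*} [AddCommGroup M] [Module R M]

instance : Preorder (FGSubquotient R M) where
  le A B := A.den ≤ B.den ∧ A.num ≤ B.num ∧ A.num ⊓ B.den ≤ A.den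
  le_refl A := ⟨le_rfl, le_rfl, inf_le_right⟩
  le_trans A B C hAB hBC := ⟨hAB.1.trans hBC.1, hAB.2.1.trans hBC.2.1,
    (le_inf inf_le_left ((inf_le_inf_right _ hAB.2.1).trans hBC.2.2)).trans hAB.2.2⟩

theorem den_mono : Monotone (den : FGSubquotient R M → Submodule R M) := fun _ _ h => h.1

theorem num_mono : Monotone (num : FGSubquotient R M → Submodule R M) := fun _ _ h => h.2.1

theorem num_inf_den_le {A B : FGSubquotient R M} (h : A ≤ B) : A.num ⊓ B.den ≤ A.den := h.2.2

/-- The annihilator of `num ⧸ den`. -/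
def annihilator (A : FGSubquotient R M) : Ideal R := A.den.colon A.num

theorem annihilator_antitone :
    Antitone (annihilator : FGSubquotient R M → Ideal R) := fun A _ h r hr =>
  Submodule.mem_colon.mpr fun x hx =>
    num_inf_den_le h ⟨A.num.smul_mem r hx, Submodule.mem_colon.mp hr x (num_mono h hx)⟩

theorem annihilator_smul_num_le (A : FGSubquotient R M) : A.annihilator • A.num ≤ A.den :=
  Submodule.smul_le.mpr fun _ hr x hx => Submodule.mem_colon.mp hr x hx

theorem annihilator_le_colon_singleton (A : FGSubquotient R M) {z : M} (hz : z ∈ A.num) :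
    A.annihilator ≤ A.den.colon {z} :=
  Submodule.colon_mono le_rfl (Set.singleton_subset_iff.mpr hz)

theorem num_inf_iSup_den_le {A : ℕ → FGSubquotient R M} (hA : Monotone A) (j : ℕ) :
    (A j).num ⊓ ⨆ k, (A k).den ≤ (A j).den := by
  refine (den_mono.comp hA).directed_le.inf_iSup_eq.trans_le (iSup_le fun k => ?_)
  rcases le_total j k with hjk | hkj
  · exact num_inf_den_le (hA hjk)
  · exact inf_le_right.trans (den_mono (hA hkj))

theorem iSup_den_colon_singleton {A : ℕ → FGSubquotient R M} (hA : Monotone A) {j : ℕ} {z : M}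
    (hz : z ∈ (A j).num) : (⨆ k, (A k).den).colon {z} = (A j).den.colon {z} := by
  ext r
  simp only [Submodule.mem_colon_singleton]
  exact ⟨fun hr => num_inf_iSup_den_le hA j ⟨(A j).num.smul_mem r hz, hr⟩,
    fun hr => le_iSup (fun k => (A k).den) j hr⟩

/-- Adjoin to `num ⧸ den` a generator `z` subject to the relation `p • z = 0`. -/
def adjoin (A : FGSubquotient R M) (p : Ideal R) (z : M) : FGSubquotient R M where
  den := A.den ⊔ p • Submodule.span R {z}
  num := A.num ⊔ Submodule.span R {z}
  den_le_num := sup_le_sup A.den_le_num Submodule.smul_le_right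
  fg_num := A.fg_num.sup (Submodule.fg_span_singleton z)

theorem mem_num_adjoin (A : FGSubquotient R M) (p : Ideal R) (z : M) :
    z ∈ (A.adjoin p z).num :=
  Submodule.mem_sup_right (Submodule.mem_span_singleton_self z)

theorem le_adjoin (A : FGSubquotient R M) (p : Ideal R) {z : M}
    (hz : Submodule.span R {z} ⊓ A.num ≤ A.den) : A ≤ A.adjoin p z := by
  refine ⟨le_sup_left, le_sup_left, ?_⟩
  calc A.num ⊓ (A.den ⊔ p • Submodule.span R {z})
      = A.den ⊔ p • Submodule.span R {z} ⊓ A.num := by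
        rw [inf_comm, sup_inf_assoc_of_le _ A.den_le_num]
    _ ≤ A.den := sup_le le_rfl ((inf_le_inf_right _ Submodule.smul_le_right).trans hz)

theorem annihilator_mul_le_annihilator_adjoin (A : FGSubquotient R M) (p : Ideal R) (z : M) :
    A.annihilator * p ≤ (A.adjoin p z).annihilator := by
  intro r hr
  rw [annihilator, Submodule.mem_colon_iff_le, ← Submodule.ideal_span_singleton_smul]
  calc Ideal.span {r} • (A.num ⊔ Submodule.span R {z})
      ≤ (A.annihilator * p) • (A.num ⊔ Submodule.span R {z}) :=
        Submodule.smul_mono_left ((Ideal.span_singleton_le_iff_mem _).mpr hr)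
    _ = (A.annihilator * p) • A.num ⊔ (A.annihilator * p) • Submodule.span R {z} :=
        Submodule.smul_sup _ _ _
    _ ≤ A.annihilator • A.num ⊔ p • Submodule.span R {z} :=
        sup_le_sup (Submodule.smul_mono_left Ideal.mul_le_left)
          (Submodule.smul_mono_left Ideal.mul_le_right)
    _ ≤ A.den ⊔ p • Submodule.span R {z} := sup_le_sup_right A.annihilator_smul_num_le _

theorem den_adjoin_colon_singleton (A : FGSubquotient R M) {p : Ideal R} {z : M}
    (hz : A.den.colon {z} ≤ p) : (A.adjoin p z).den.colon {z} = p := by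
  ext r
  rw [Submodule.mem_colon_singleton]
  constructor
  · intro hr
    obtain ⟨u, hu, v, hv, huv⟩ := Submodule.mem_sup.mp hr
    obtain ⟨a, ha, rfl⟩ := Submodule.mem_smul_span_singleton.mp hv
    have : r - a ∈ p := hz (Submodule.mem_colon_singleton.mpr (by
      rwa [sub_smul, ← huv, add_sub_cancel_right]))
    simpa using p.add_mem this ha
  · exact fun hr => Submodule.mem_sup_right
      (Submodule.smul_mem_smul hr (Submodule.mem_span_singleton_self z))

end Basic

section Noetherian

variable {R : Type*} [CommRing R] [IsNoetherianRing R]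
  {M : Type*} [AddCommGroup M] [Module R M]

theorem fg_den (A : FGSubquotient R M) : A.den.FG :=
  isNoetherian_submodule.mp (isNoetherian_of_fg_of_noetherian A.num A.fg_num) _ A.den_le_num

theorem exists_notMem_span_smul_inf_num_le (A : FGSubquotient R M) {p : Ideal R} [p.IsPrime]
    (hAp : ¬ A.annihilator ≤ p) (y : M) :
    ∃ s ∉ p, Submodule.span R {s • y} ⊓ A.num ≤ A.den := by
  obtain ⟨n, hn⟩ := exists_pow_smul_inf_le_smul A.annihilator
    (A.fg_num.sup (Submodule.fg_span_singleton y)) (le_sup_left (a := A.num))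
  obtain ⟨s, hs, hsp⟩ := SetLike.not_le_iff_exists.mp
    fun h : A.annihilator ^ n ≤ p => hAp (Ideal.IsPrime.le_of_pow_le h)
  refine ⟨s, hsp, (inf_le_inf_right _ ?_).trans (hn.trans A.annihilator_smul_num_le)⟩
  exact (Submodule.span_singleton_le_iff_mem _ _).mpr (Submodule.smul_mem_smul hs
    (Submodule.mem_sup_right (Submodule.mem_span_singleton_self y)))

theorem exists_le_den_colon_singleton_eq (A : FGSubquotient R M) {p : PrimeSpectrum R}
    (hp : p ∈ Module.support R (M ⧸ A.den)) (hAp : ¬ A.annihilator ≤ p.asIdeal) :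
    ∃ B, A ≤ B ∧ A.annihilator * p.asIdeal ≤ B.annihilator ∧
      ∃ z ∈ B.num, B.den.colon {z} = p.asIdeal := by
  obtain ⟨y, hy⟩ := mem_support_quotient_iff.mp hp
  obtain ⟨s, hs, hsA⟩ := A.exists_notMem_span_smul_inf_num_le hAp y
  have hsy : A.den.colon {s • y} ≤ p.asIdeal := fun r hr => by
    rw [Submodule.mem_colon_singleton, smul_smul, ← Submodule.mem_colon_singleton] at hr
    exact (p.isPrime.mem_or_mem (hy hr)).resolve_right hs
  exact ⟨A.adjoin p.asIdeal (s • y), A.le_adjoin _ hsA,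
    A.annihilator_mul_le_annihilator_adjoin _ _, s • y, A.mem_num_adjoin _ _,
    A.den_adjoin_colon_singleton hsy⟩

end Noetherian

end FGSubquotient

section Chain

variable {R : Type*} [CommRing R] [IsNoetherianRing R]
  {M : Type*} [AddCommGroup M] [Module R M]

theorem exists_monotone_fgSubquotient {X : Set (PrimeSpectrum R)} (hX : X.Infinite)
    (hfin : ∀ q ∈ X, (X ∩ Set.Ici q).Finite)
    (hsupp : ∀ N : Submodule R M, N.FG → X ⊆ Module.support R (M ⧸ N)) :
    ∃ (A : ℕ → FGSubquotient R M) (p : ℕ → PrimeSpectrum R), Monotone A ∧ ∀ j,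
      ¬ (A j).annihilator ≤ (p j).asIdeal ∧
      ∃ z ∈ (A (j + 1)).num, (A (j + 1)).den.colon {z} = (p j).asIdeal := by
  let Stage := {A : FGSubquotient R M // {q ∈ X | A.annihilator ≤ q.asIdeal}.Finite}
  have exists_next (A : Stage) : ∃ (B : Stage) (p : PrimeSpectrum R), A.1 ≤ B.1 ∧
      ¬ A.1.annihilator ≤ p.asIdeal ∧ ∃ z ∈ B.1.num, B.1.den.colon {z} = p.asIdeal := by
    obtain ⟨p, hpX, hp⟩ := hX.exists_notMem_finite A.2
    have hAp : ¬ A.1.annihilator ≤ p.asIdeal := fun h => hp ⟨hpX, h⟩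
    obtain ⟨B, hAB, hmul, hz⟩ :=
      A.1.exists_le_den_colon_singleton_eq (hsupp _ A.1.fg_den hpX) hAp
    refine ⟨⟨B, (A.2.union (hfin p hpX)).subset fun q hq => ?_⟩, p, hAB, hAp, hz⟩
    exact (q.isPrime.mul_le.mp (hmul.trans hq.2)).imp (⟨hq.1, ·⟩) (⟨hq.1, ·⟩)
  choose succ p hle hp using exists_next
  let zero : Stage := ⟨⟨⊥, ⊥, le_rfl, Submodule.fg_bot⟩,
    Set.finite_empty.subset fun q hq => q.isPrime.ne_top (top_le_iff.mp
      (((Submodule.colon_eq_top_iff_subset _).mpr subset_rfl).ge.trans hq.2))⟩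
  let A (j : ℕ) : Stage := succ^[j] zero
  have A_succ (j : ℕ) : A (j + 1) = succ (A j) := Function.iterate_succ_apply' succ j zero
  refine ⟨fun j => (A j).1, fun j => p (A j), monotone_nat_of_le_succ fun j => ?_, fun j => ?_⟩
  · simpa only [A_succ] using hle (A j)
  · simpa only [A_succ] using hp (A j)

theorem exists_infinite_associatedPrimes_quotient {X : Set (PrimeSpectrum R)} (hX : X.Infinite)
    (hsupp : ∀ N : Submodule R M, N.FG → X ⊆ Module.support R (M ⧸ N)) :
    ∃ N : Submodule R M, (associatedPrimes R (M ⧸ N)).Infinite := by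
  obtain ⟨Y, hYX, hY, hfin⟩ := exists_infinite_subset_finite_inter_Ici hX
  obtain ⟨A, p, hA, hp⟩ := exists_monotone_fgSubquotient hY hfin
    fun N hN => hYX.trans (hsupp N hN)
  choose hAp z hz hcolon using hp
  refine ⟨⨆ k, (A k).den, Set.infinite_of_injective_forall_mem
    (f := fun j => (p j).asIdeal) (Function.Injective.of_lt_imp_ne fun j k hjk h => ?_) fun j => ?_⟩
  · refine hAp k ?_
    calc (A k).annihilator ≤ (A (j + 1)).annihilator :=
          FGSubquotient.annihilator_antitone (hA hjk)
      _ ≤ (A (j + 1)).den.colon {z j} := FGSubquotient.annihilator_le_colon_singleton _ (hz j)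
      _ = (p k).asIdeal := (hcolon j).trans h
  · exact mem_associatedPrimes_quotient_iff.mpr ⟨(p j).isPrime, z j,
      (FGSubquotient.iSup_den_colon_singleton hA (hz j)).trans (hcolon j)⟩

end Chain

/-! ### The structure of weakly Laskerian modules -/

/-- `M` is weakly Laskerian: every quotient of `M` has finitely many associated primes. -/
def IsWeaklyLaskerian (R M : Type*) [CommRing R] [AddCommGroup M] [Module R M] : Prop :=
  ∀ N : Submodule R M, (associatedPrimes R (M ⧸ N)).Finite

section Structure

variable {R : Type*} [CommRing R] [IsNoetherianRing R]
  {M : Type*} [AddCommGroup M] [Module R M]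

theorem IsWeaklyLaskerian.exists_fg_support_quotient_subset (hM : IsWeaklyLaskerian R M) :
    ∃ N : Submodule R M, N.FG ∧ ∀ N' : Submodule R M, N'.FG →
      Module.support R (M ⧸ N) ⊆ Module.support R (M ⧸ N') := by
  let supp (N : Submodule R M) : TopologicalSpace.Closeds (PrimeSpectrum R) :=
    ⟨Module.support R (M ⧸ N), isClosed_support_of_finite_associatedPrimes (hM N)⟩
  obtain ⟨N, hN⟩ := exists_minimalFor_of_wellFoundedLT
    (Submodule.FG : Submodule R M → Prop) supp ⟨⊥, Submodule.fg_bot⟩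
  refine ⟨N, hN.prop, fun N' hN' => ?_⟩
  calc Module.support R (M ⧸ N)
      ⊆ Module.support R (M ⧸ (N ⊔ N')) :=
        hN.le_of_le (hN.prop.sup hN') (support_quotient_subset_of_le le_sup_left)
    _ ⊆ Module.support R (M ⧸ N') := support_quotient_subset_of_le le_sup_right

theorem IsWeaklyLaskerian.exists_fg_finite_support (hM : IsWeaklyLaskerian R M) :
    ∃ N : Submodule R M, N.FG ∧ (Module.support R (M ⧸ N)).Finite := by
  obtain ⟨N, hN, hmin⟩ := hM.exists_fg_support_quotient_subset
  refine ⟨N, hN, Set.not_infinite.mp fun hinf => ?_⟩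
  obtain ⟨L, hL⟩ := exists_infinite_associatedPrimes_quotient hinf hmin
  exact hL (hM L)

theorem isWeaklyLaskerian_of_fg_finite_support {N : Submodule R M} (hN : N.FG)
    (hsupp : (Module.support R (M ⧸ N)).Finite) : IsWeaklyLaskerian R M := by
  intro L
  let K : Submodule R (M ⧸ L) := N.map L.mkQ
  have : Module.Finite R K := Module.Finite.iff_fg.mpr (hN.map _)
  have hK : (Module.support R ((M ⧸ L) ⧸ K)).Finite := by
    rw [(Submodule.quotientQuotientEquivQuotientSup L N).support_eq]
    exact hsupp.subset (support_quotient_subset_of_le le_sup_right)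
  have hfin := finite_associatedPrimes_of_finite_support hK
  exact ((associatedPrimes.finite R K).union hfin).subset
    (associatedPrimes.subset_union_of_exact K.injective_subtype
      (LinearMap.exact_subtype_mkQ K))

theorem isWeaklyLaskerian_iff_exists_fg_finite_support :
    IsWeaklyLaskerian R M ↔
      ∃ N : Submodule R M, N.FG ∧ (Module.support R (M ⧸ N)).Finite :=
  ⟨fun hM => hM.exists_fg_finite_support, fun ⟨_, hN, hsupp⟩ =>
    isWeaklyLaskerian_of_fg_finite_support hN hsupp⟩

end Structure

/-! ### Base change -/

section Krull

variable {R : Type*} [CommRing R] [IsNoetherianRing R]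

theorem mem_minimalPrimes_of_lt_of_mem_minimalPrimes_sup_span {J q p : Ideal R} {a : R}
    [q.IsPrime] (hJq : J ≤ q) (hqp : q < p) (hp : p ∈ (J ⊔ Ideal.span {a}).minimalPrimes) :
    q ∈ J.minimalPrimes := by
  have hspan : Ideal.span (insert a (J : Set R)) = J ⊔ Ideal.span {a} := by
    rw [Ideal.span_insert, Ideal.span_eq, sup_comm]
  rw [← J.span_eq]
  refine Ideal.mem_minimalPrimes_span_of_mem_minimalPrimes_span_insert hqp a J (hspan ▸ hp) J hJq ?_
  exact fun x hx => Ideal.le_radical (Ideal.subset_span (Set.mem_insert_of_mem a hx))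

theorem eq_of_lt_of_finite_Ici {p q q' : PrimeSpectrum R} (hp : (Set.Ici p).Finite)
    (hpq : p ≤ q) (hqq' : q < q') : q = p := by
  have hfin : {r ∈ Set.Ici p | ¬ q' ≤ r}.Finite := hp.subset (Set.sep_subset _ _)
  obtain ⟨a, haq', ha⟩ := Set.not_subset.mp fun h =>
    let ⟨_, hr, hle⟩ := (Ideal.subset_union_prime_finite hfin (f := PrimeSpectrum.asIdeal) p p
      fun r _ _ _ => r.isPrime).mp h
    hr.2 hle
  have hq' : q'.asIdeal ∈ (p.asIdeal ⊔ Ideal.span {a}).minimalPrimes := by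
    refine ⟨⟨q'.isPrime, sup_le (hpq.trans hqq'.le)
      ((Ideal.span_singleton_le_iff_mem _).mpr haq')⟩, fun r ⟨hr, hpr⟩ _ => ?_⟩
    by_contra hq'r
    exact ha (Set.mem_biUnion (x := ⟨r, hr⟩) ⟨le_sup_left.trans hpr, hq'r⟩
      ((Ideal.span_singleton_le_iff_mem _).mp (le_sup_right.trans hpr)))
  have hq := mem_minimalPrimes_of_lt_of_mem_minimalPrimes_sup_span hpq hqq' hq'
  rw [Ideal.minimalPrimes_eq_subsingleton_self] at hq
  exact PrimeSpectrum.ext hq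

end Krull

section Fibers

variable {R S : Type*} [CommRing R] [IsNoetherianRing R] [CommRing S] [IsNoetherianRing S]
  {f : R →+* S} {I : Ideal R}

theorem mem_minimalPrimes_map_comap (hI : I.map f ≤ Ideal.jacobson ⊥)
    (hinj : Set.InjOn (PrimeSpectrum.comap f) (PrimeSpectrum.zeroLocus (I.map f)))
    {Q : PrimeSpectrum S} (hIQ : ¬ I.map f ≤ Q.asIdeal)
    (hfin : (Set.Ici (PrimeSpectrum.comap f Q)).Finite) :
    Q.asIdeal ∈ ((PrimeSpectrum.comap f Q).asIdeal.map f).minimalPrimes := by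
  obtain ⟨m, hm, hQm⟩ := Ideal.exists_le_maximal Q.asIdeal Q.isPrime.ne_top
  let P : PrimeSpectrum S := ⟨m, hm.isPrime⟩
  have hIP : I.map f ≤ P.asIdeal := hI.trans (sInf_le ⟨bot_le, hm⟩)
  obtain ⟨a, haI, haQ⟩ := SetLike.not_le_iff_exists.mp (mt Ideal.map_le_iff_le_comap.mpr hIQ)
  refine mem_minimalPrimes_of_lt_of_mem_minimalPrimes_sup_span (a := f a) (p := P.asIdeal)
    Ideal.map_comap_le ?_ ⟨⟨P.isPrime, sup_le (Ideal.map_comap_le.trans hQm) ?_⟩, ?_⟩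
  · exact lt_of_le_of_ne hQm fun h => hIQ (h ▸ hIP)
  · exact (Ideal.span_singleton_le_iff_mem _).mpr (hIP (Ideal.mem_map_of_mem f haI))
  · rintro r ⟨hr, hQr⟩ hrP
    let r' : PrimeSpectrum S := ⟨r, hr⟩
    have har : f a ∈ r := (Ideal.span_singleton_le_iff_mem _).mp (le_sup_right.trans hQr)
    have hcomap : PrimeSpectrum.comap f r' = PrimeSpectrum.comap f P := by
      refine (Ideal.comap_mono hrP : PrimeSpectrum.comap f r' ≤ _).eq_of_not_lt fun hlt => haQ ?_
      rw [← PrimeSpectrum.comap_asIdeal, ← eq_of_lt_of_finite_Ici hfin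
        (Ideal.map_le_iff_le_comap.mp (le_sup_left.trans hQr)) hlt]
      exact har
    have hIr : I.map f ≤ r := by
      rw [Ideal.map_le_iff_le_comap] at hIP ⊢
      exact hIP.trans_eq (congrArg PrimeSpectrum.asIdeal hcomap).symm
    exact (congrArg PrimeSpectrum.asIdeal (hinj hIr hIP hcomap)).ge

/-- A prime of `S` over `Z` either contains `I.map f`, or is minimal over the extension of its
contraction. -/
theorem finite_preimage_comap_of_isUpperSet (hI : I.map f ≤ Ideal.jacobson ⊥)
    (hinj : Set.InjOn (PrimeSpectrum.comap f) (PrimeSpectrum.zeroLocus (I.map f)))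
    {Z : Set (PrimeSpectrum R)} (hZ : IsUpperSet Z) (hfin : Z.Finite) :
    (PrimeSpectrum.comap f ⁻¹' Z).Finite := by
  have hclosed : (PrimeSpectrum.comap f ⁻¹' Z ∩ PrimeSpectrum.zeroLocus (I.map f)).Finite :=
    Set.Finite.of_injOn (f := PrimeSpectrum.comap f) (fun _ hQ => hQ.1)
      (hinj.mono Set.inter_subset_right) hfin
  have hminimal : (⋃ p ∈ Z, PrimeSpectrum.asIdeal ⁻¹' (p.asIdeal.map f).minimalPrimes).Finite :=
    hfin.biUnion fun p _ => (Ideal.finite_minimalPrimes_of_isNoetherianRing S _).preimage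
      fun _ _ _ _ => PrimeSpectrum.ext
  refine (hclosed.union hminimal).subset fun Q hQ => ?_
  by_cases hIQ : I.map f ≤ Q.asIdeal
  · exact Or.inl ⟨hQ, hIQ⟩
  · exact Or.inr (Set.mem_biUnion hQ (mem_minimalPrimes_map_comap hI hinj hIQ
      (hfin.subset (hZ.Ici_subset hQ))))

end Fibers

section BaseChange

variable {R : Type*} [CommRing R] (S : Type*) [CommRing S] [Algebra R S]
  {M : Type*} [AddCommGroup M] [Module R M]

theorem support_tensorProduct_subset (N : Type*) [AddCommGroup N] [Module R N] :
    Module.support R (N ⊗[R] M) ⊆ Module.support R M := by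
  intro p hp
  obtain ⟨_, ⟨s, x, rfl⟩, hx⟩ :=
    (Module.mem_support_iff_of_span_eq_top (TensorProduct.span_tmul_eq_top R N M)).mp hp
  refine Module.mem_support_iff_exists_annihilator.mpr ⟨x, le_trans (fun r hr => ?_) hx⟩
  rw [Submodule.mem_annihilator_span_singleton] at hr ⊢
  rw [← TensorProduct.tmul_smul, hr, TensorProduct.tmul_zero]

theorem support_baseChange_subset_preimage_comap :
    Module.support S (S ⊗[R] M) ⊆
      PrimeSpectrum.comap (algebraMap R S) ⁻¹' Module.support R M :=
  Module.support_subset_preimage_comap.trans (Set.preimage_mono (support_tensorProduct_subset S))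

theorem fg_baseChange {N : Submodule R M} (hN : N.FG) : (N.baseChange S).FG := by
  obtain ⟨s, rfl⟩ := hN
  rw [Submodule.baseChange_span]
  exact Submodule.fg_span (s.finite_toSet.image _)

theorem support_quotient_baseChange (N : Submodule R M) :
    Module.support S ((S ⊗[R] M) ⧸ N.baseChange S) = Module.support S (S ⊗[R] (M ⧸ N)) :=
  (AlgebraTensorModule.tensorQuotientEquiv S R S N).symm.support_eq

variable {S}

theorem IsWeaklyLaskerian.baseChange [IsNoetherianRing R] [IsNoetherianRing S] {I : Ideal R}
    (hI : I.map (algebraMap R S) ≤ Ideal.jacobson ⊥)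
    (hinj : Set.InjOn (PrimeSpectrum.comap (algebraMap R S))
      (PrimeSpectrum.zeroLocus (I.map (algebraMap R S))))
    (hM : IsWeaklyLaskerian R M) : IsWeaklyLaskerian S (S ⊗[R] M) := by
  obtain ⟨N, hN, hsupp⟩ := isWeaklyLaskerian_iff_exists_fg_finite_support.mp hM
  refine isWeaklyLaskerian_iff_exists_fg_finite_support.mpr ⟨_, fg_baseChange S hN, ?_⟩
  rw [support_quotient_baseChange]
  refine Set.Finite.subset ?_ (support_baseChange_subset_preimage_comap S)
  exact finite_preimage_comap_of_isUpperSet hI hinj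
    (fun _ _ => Module.mem_support_mono) hsupp

end BaseChange

/-! ### Adic completions -/

section Completion

variable {R : Type*} [CommRing R]

theorem surjective_mk_comp_algebraMap_adicCompletion {I : Ideal R} (hI : I.FG) :
    Function.Surjective ((Ideal.Quotient.mk (I.map (algebraMap R (AdicCompletion I R)))).comp
      (algebraMap R (AdicCompletion I R))) := by
  intro y
  obtain ⟨y, rfl⟩ := Ideal.Quotient.mk_surjective y
  obtain ⟨r, hr⟩ := Ideal.Quotient.mk_surjective (AdicCompletion.evalOneₐ I y)
  refine ⟨r, ?_⟩
  rw [RingHom.comp_apply, Ideal.Quotient.eq, ← AdicCompletion.ker_evalOneₐ_eq_map I hI,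
    RingHom.mem_ker, map_sub, sub_eq_zero]
  exact (RingHom.congr_fun (AdicCompletion.evalOneₐ_comp_algebraMap_eq_mk I) r).trans hr

theorem map_algebraMap_adicCompletion_le_jacobson {I : Ideal R} (hI : I.FG) :
    I.map (algebraMap R (AdicCompletion I R)) ≤ Ideal.jacobson ⊥ :=
  have := AdicCompletion.isAdicComplete_self I hI
  IsAdicComplete.le_jacobson_bot _

theorem injOn_comap_zeroLocus_of_surjective {S : Type*} [CommRing S] {f : R →+* S} {J : Ideal S}
    (hf : Function.Surjective ((Ideal.Quotient.mk J).comp f)) :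
    Set.InjOn (PrimeSpectrum.comap f) (PrimeSpectrum.zeroLocus J) := by
  have hrange := range_comap_of_surjective _ (Ideal.Quotient.mk J) Ideal.Quotient.mk_surjective
  rw [Ideal.mk_ker] at hrange
  rw [← hrange]
  rintro _ ⟨P, rfl⟩ _ ⟨Q, rfl⟩ h
  rw [PrimeSpectrum.comap_injective_of_surjective _ hf h]

section Functoriality

variable {P : Type*} [CommRing P]

theorem pow_le_comap_pow {J : Ideal P} {I : Ideal R} {g : P →+* R} (hg : J ≤ I.comap g) (n : ℕ) :
    J ^ n ≤ (I ^ n).comap g :=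
  (Ideal.pow_right_mono hg n).trans (Ideal.le_comap_pow g n)

theorem factorPow_comp_quotientMap_comp_evalₐ {J : Ideal P} {I : Ideal R} {g : P →+* R}
    (hg : J ≤ I.comap g) {m n : ℕ} (hmn : m ≤ n) :
    (Ideal.Quotient.factorPow I hmn).comp
        ((Ideal.quotientMap (I ^ n) g (pow_le_comap_pow hg n)).comp
          (AdicCompletion.evalₐ J n : AdicCompletion J P →+* P ⧸ J ^ n)) =
      (Ideal.quotientMap (I ^ m) g (pow_le_comap_pow hg m)).comp
        (AdicCompletion.evalₐ J m : AdicCompletion J P →+* P ⧸ J ^ m) := by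
  ext x
  obtain ⟨x, rfl⟩ := AdicCompletion.mk_surjective J P x
  simp only [RingHom.comp_apply, RingHom.coe_coe, AdicCompletion.evalₐ_mk,
    Ideal.quotientMap_mk, Ideal.Quotient.factorPow, Ideal.Quotient.factor_mk]
  rw [Ideal.Quotient.eq, ← map_sub]
  exact pow_le_comap_pow hg m (Ideal.Quotient.eq.mp (AdicCompletion.Ideal.mk_eq_mk J hmn x))

/-- The ring homomorphism between adic completions induced by `g : P →+* R` when `g` carries `J`
into `I`. -/
noncomputable def adicCompletionMap {J : Ideal P} {I : Ideal R} (g : P →+* R)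
    (hg : J ≤ I.comap g) : AdicCompletion J P →+* AdicCompletion I R :=
  AdicCompletion.liftRingHom I _ (factorPow_comp_quotientMap_comp_evalₐ hg)

theorem adicCompletionMap_comp_algebraMap {J : Ideal P} {I : Ideal R} {g : P →+* R}
    (hg : J ≤ I.comap g) :
    (adicCompletionMap g hg).comp (algebraMap P (AdicCompletion J P)) =
      (algebraMap R (AdicCompletion I R)).comp g := by
  ext p : 1
  refine AdicCompletion.ext_evalₐ fun n => (AdicCompletion.evalₐ_liftRingHom I _
    (factorPow_comp_quotientMap_comp_evalₐ hg) n _).trans ?_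
  simp

theorem adicCompletionMap_surjective {J : Ideal P} {g : P →+* R} (hJ : J.FG)
    (hg : Function.Surjective g) :
    Function.Surjective (adicCompletionMap g (Ideal.le_comap_map : J ≤ (J.map g).comap g)) := by
  set F := adicCompletionMap g (Ideal.le_comap_map : J ≤ (J.map g).comap g)
  have hF : F.comp (algebraMap P _) = (algebraMap R _).comp g := adicCompletionMap_comp_algebraMap _
  have hmap : (J.map (algebraMap P (AdicCompletion J P))).map F =
      (J.map g).map (algebraMap R (AdicCompletion (J.map g) R)) := by
    rw [Ideal.map_map, hF, ← Ideal.map_map]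
  have := AdicCompletion.isAdicComplete_self J hJ
  have := AdicCompletion.isAdicComplete_self (J.map g) (hJ.map g)
  have : IsHausdorff ((J.map (algebraMap P (AdicCompletion J P))).map F)
      (AdicCompletion (J.map g) R) := by rw [hmap]; infer_instance
  refine surjective_of_mk_map_comp_surjective (I := J.map (algebraMap P (AdicCompletion J P))) F ?_
  refine Function.Surjective.of_comp (g := algebraMap P _) ?_
  rw [← RingHom.coe_comp, RingHom.comp_assoc, hF, hmap, ← RingHom.comp_assoc]
  exact (surjective_mk_comp_algebraMap_adicCompletion (hJ.map g)).comp hg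

end Functoriality

theorem isNoetherianRing_adicCompletion [IsNoetherianRing R] (I : Ideal R) :
    IsNoetherianRing (AdicCompletion I R) := by
  obtain ⟨n, a, ha⟩ := Submodule.fg_iff_exists_fin_generating_family.mp (IsNoetherian.noetherian I)
  let J := MvPolynomial.idealOfVars (Fin n) R
  let g : MvPolynomial (Fin n) R →+* R := MvPolynomial.eval a
  have hg : Function.Surjective g := fun r => ⟨MvPolynomial.C r, by simp [g]⟩
  have hJ : J.map g = I := by
    have hX : g ∘ MvPolynomial.X = a := funext fun i => by simp [g]
    rw [Ideal.map_span, ← Set.range_comp, hX]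
    exact ha
  have : IsNoetherianRing (AdicCompletion J (MvPolynomial (Fin n) R)) :=
    isNoetherianRing_of_ringEquiv _ (MvPowerSeries.toAdicCompletionAlgEquiv (Fin n) R).toRingEquiv
  rw [← hJ]
  exact isNoetherianRing_of_surjective _ _ _
    (adicCompletionMap_surjective (MvPolynomial.idealOfVars_fg _ _) hg)

end Completion

theorem weaklyLaskerian_tensor_completion_general {R : Type*} [CommRing R] [IsNoetherianRing R]
    (I : Ideal R) {M : Type*} [AddCommGroup M] [Module R M] (hM : IsWeaklyLaskerian R M) :
    IsWeaklyLaskerian (AdicCompletion I R) (AdicCompletion I R ⊗[R] M) := by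
  have := isNoetherianRing_adicCompletion I
  have hI : I.FG := IsNoetherian.noetherian I
  exact hM.baseChange (map_algebraMap_adicCompletion_le_jacobson hI)
    (injOn_comap_zeroLocus_of_surjective (surjective_mk_comp_algebraMap_adicCompletion hI))

/-- If `(R, m)` is a Noetherian local ring and `M` a weakly Laskerian `R`-module, then
`M ⊗[R] R*` is a weakly Laskerian module over the `m`-adic completion `R*` of `R`. -/
theorem weaklyLaskerian_tensor_completion {R : Type*} [CommRing R] [IsNoetherianRing R]
    [IsLocalRing R] {M : Type*} [AddCommGroup M] [Module R M]
    (hwl : ∀ N : Submodule R M, (associatedPrimes R (M ⧸ N)).Finite) :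
    ∀ N : Submodule (AdicCompletion (maximalIdeal R) R)
        (AdicCompletion (maximalIdeal R) R ⊗[R] M),
      (associatedPrimes (AdicCompletion (maximalIdeal R) R)
        ((AdicCompletion (maximalIdeal R) R ⊗[R] M) ⧸ N)).Finite :=
  weaklyLaskerian_tensor_completion_general (maximalIdeal R) hwl
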